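/- Let n ≥ 1. For each i = 1,…,n let p_i : ℝ → ℝ be a strictly positive probability density on ℝ whose logarithm is twice continuously differentiable, and suppose at most one index i has (log p_i)'' constant. Let A be an n×n real orthogonal matrix (AᵀA = I) and let μ be the product measure on ℝⁿ whose i-th coordinate has density p_i. If the pushforward of μ under the linear map x ↦ A x is itself a product measure, then A has exactly one nonzero entry in each row and each column. -/

import Mathlib

open MeasureTheory Matrix Real

/-- If a product of (arbitrary) measures is finite and nonzero, each factor is sigma-finite. -/
theorem ica_sigmaFinite {n : ℕ} (ν : Fin n → Measure ℝ)
    (h0 : Measure.pi ν Set.univ ≠ 0) (h1 : Measure.pi ν Set.univ ≠ ⊤) (i : Fin n) :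
    SigmaFinite (ν i) := by
  classical
  rw [Measure.pi, toMeasure_apply _ _ MeasurableSet.univ] at h0 h1
  have hne : ∀ j, ν j Set.univ ≠ 0 := by
    intro j hj
    apply h0
    have := OuterMeasure.pi_pi_le (fun i => (ν i).toOuterMeasure) (fun _ => Set.univ)
    rw [Set.pi_univ] at this
    refine le_antisymm (this.trans (le_of_eq ?_)) (zero_le)
    exact Finset.prod_eq_zero (Finset.mem_univ j) hj
  rw [OuterMeasure.pi, OuterMeasure.boundedBy_apply] at h1
  have h2 := lt_top_iff_ne_top.2 h1
  simp only [iInf_lt_iff] at h2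
  obtain ⟨t, ht, hsum⟩ := h2
  have hfin : ∀ m, (t m).Nonempty → ∏ j, ν j (Set.image (Function.eval j) (t m)) ≠ ⊤ := by
    intro m hm
    have := ENNReal.ne_top_of_tsum_ne_top hsum.ne m
    simpa [hm, piPremeasure] using this
  have hx : ∀ j, ∃ x : ℝ, ∀ m, x ∈ Set.image (Function.eval j) (t m) → ν j (Set.image (Function.eval j) (t m)) ≠ 0 := by
    intro j
    by_contra hcon
    push Not at hcon
    apply hne j
    have hz : ν j (⋃ m, ⋃ (_ : ν j (Set.image (Function.eval j) (t m)) = 0), Set.image (Function.eval j) (t m)) = 0 := by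
      refine measure_iUnion_null fun m => measure_iUnion_null fun h => h
    refine measure_mono_null (fun x _ => ?_) hz
    obtain ⟨m, hm, hm0⟩ := hcon x
    exact Set.mem_iUnion₂.2 ⟨m, hm0, hm⟩
  choose x hx using hx
  refine Measure.sigmaFinite_of_countable
    (S := Set.image (fun m => Set.image (Function.eval i) (t m)) {m | ν i (Set.image (Function.eval i) (t m)) < ⊤})
    ((Set.to_countable _).image _) ?_ ?_
  · rintro _ ⟨m, hm, rfl⟩
    exact hm
  · refine Set.eq_univ_of_forall fun s => ?_
    obtain ⟨m, hm⟩ := Set.mem_iUnion.1 (ht (Set.mem_univ (Function.update x i s)))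
    refine ⟨_, ⟨m, ?_, rfl⟩, ⟨_, hm, by simp⟩⟩
    show ν i (Set.image (Function.eval i) (t m)) < ⊤
    rw [lt_top_iff_ne_top]
    intro htop
    apply hfin m ⟨_, hm⟩
    rw [← Finset.mul_prod_erase _ _ (Finset.mem_univ i), htop]
    refine ENNReal.top_mul (Finset.prod_ne_zero_iff.2 fun j hj => ?_)
    refine hx j m ⟨_, hm, ?_⟩
    simp [Finset.ne_of_mem_erase hj]

/-- A finite product of integrable densities gives a density. -/
theorem ica_pi_density {n : ℕ} (p : Fin n → ℝ → ℝ) (hpos : ∀ i, ∀ t : ℝ, 0 < p i t)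
    (hint : ∀ i, Integrable (p i)) :
    Measure.pi (fun i => volume.withDensity (fun t => ENNReal.ofReal (p i t))) =
      (volume : Measure (Fin n → ℝ)).withDensity
        (fun x => ENNReal.ofReal (∏ i, p i (x i))) := by
  have hf : ∀ i, IsFiniteMeasure (volume.withDensity (fun t => ENNReal.ofReal (p i t))) := by
    intro i
    exact isFiniteMeasure_withDensity_ofReal (hint i).2
  refine Measure.pi_eq fun s hs => ?_
  rw [withDensity_apply _ (MeasurableSet.univ_pi hs), volume_pi, Measure.restrict_pi_pi,
    ← ofReal_integral_eq_lintegral_ofReal, integral_fintype_prod_eq_prod,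
    ENNReal.ofReal_prod_of_nonneg]
  · refine Finset.prod_congr rfl fun i _ => ?_
    rw [withDensity_apply _ (hs i), ofReal_integral_eq_lintegral_ofReal]
    · exact (hint i).restrict
    · exact ae_of_all _ fun t => (hpos i t).le
  · intro i _
    exact integral_nonneg fun t => (hpos i t).le
  · exact Integrable.fintype_prod fun i => (hint i).restrict
  · exact ae_of_all _ fun x => Finset.prod_nonneg fun i _ => (hpos i _).le

theorem ica_diff {n : ℕ} (G : (Fin n → ℝ) → ENNReal) (hG : Continuous G)
    (hfin : ∀ x, G x ≠ ⊤) (y : Fin n → ℝ) :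
    Filter.Tendsto (fun r : ℝ => (volume.withDensity G) (Metric.closedBall y r) /
      volume (Metric.closedBall (0 : Fin n → ℝ) r)) (nhdsWithin 0 (Set.Ioi 0)) (nhds (G y)) := by
  rw [ENNReal.tendsto_nhds (hfin y)]
  intro ε hε
  have h1 := (ENNReal.tendsto_nhds (hfin y)).1 (hG.tendsto y) ε hε
  obtain ⟨δ, hδ, hball⟩ := Metric.eventually_nhds_iff_ball.1 h1
  filter_upwards [Ioo_mem_nhdsGT hδ] with r hr
  have hsub : ∀ x ∈ Metric.closedBall y r, G x ∈ Set.Icc (G y - ε) (G y + ε) := fun x hx =>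
    hball x (Metric.closedBall_subset_ball hr.2 hx)
  have hV : volume (Metric.closedBall (0 : Fin n → ℝ) r) = volume (Metric.closedBall y r) := by
    rw [Real.volume_pi_closedBall _ hr.1.le, Real.volume_pi_closedBall _ hr.1.le]
  have hV0 : volume (Metric.closedBall y r) ≠ 0 := (Metric.measure_closedBall_pos _ _ hr.1).ne'
  have hVt : volume (Metric.closedBall y r) ≠ ⊤ := measure_closedBall_lt_top.ne
  rw [hV, withDensity_apply _ measurableSet_closedBall]
  constructor
  · rw [ENNReal.le_div_iff_mul_le (Or.inl hV0) (Or.inl hVt), ← setLIntegral_const]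
    exact setLIntegral_mono hG.measurable fun x hx => (hsub x hx).1
  · rw [ENNReal.div_le_iff hV0 hVt, ← setLIntegral_const]
    exact setLIntegral_mono measurable_const fun x hx => (hsub x hx).2

theorem ica_swap {n : ℕ} (G : (Fin n → ℝ) → ENNReal) (hG : Continuous G)
    (hfin : ∀ x, G x ≠ ⊤) (ν : Fin n → Measure ℝ) [∀ i, SigmaFinite (ν i)]
    (h : volume.withDensity G = Measure.pi ν) (y z : Fin n → ℝ) (k : Fin n) :
    G y * G z = G (Function.update y k (z k)) * G (Function.update z k (y k)) := by
  have T : ∀ a b : Fin n → ℝ, Filter.Tendsto (fun r : ℝ =>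
      ((volume.withDensity G) (Metric.closedBall a r) /
        volume (Metric.closedBall (0 : Fin n → ℝ) r)) *
      ((volume.withDensity G) (Metric.closedBall b r) /
        volume (Metric.closedBall (0 : Fin n → ℝ) r)))
      (nhdsWithin 0 (Set.Ioi 0)) (nhds (G a * G b)) := fun a b =>
    ENNReal.Tendsto.mul (ica_diff G hG hfin a) (Or.inr (hfin b))
      (ica_diff G hG hfin b) (Or.inr (hfin a))
  refine tendsto_nhds_unique_of_eventuallyEq (T y z) (T _ _) ?_
  filter_upwards [self_mem_nhdsWithin] with r hr
  have hr' : (0 : ℝ) ≤ r := le_of_lt hr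
  simp only [div_eq_mul_inv]
  rw [mul_mul_mul_comm, mul_mul_mul_comm (b := (volume _)⁻¹)]
  congr 1
  rw [h, closedBall_pi _ hr', closedBall_pi _ hr', closedBall_pi _ hr', closedBall_pi _ hr']
  simp only [Measure.pi_pi]
  rw [← Finset.prod_mul_distrib, ← Finset.prod_mul_distrib]
  refine Finset.prod_congr rfl fun i _ => ?_
  by_cases hi : i = k
  · subst hi
    simp [mul_comm]
  · simp [hi]

/-- the one-variable functional equation forces a constant second derivative -/
theorem ica_const (f : ℝ → ℝ) (hf : ContDiff ℝ 2 f) (a b : ℝ) (ha : a ≠ 0) (hb : b ≠ 0)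
    (h : ∀ s t x, f (x + s * a + t * b) + f x - f (x + t * b) - f (x + s * a) =
      f (0 + s * a + t * b) + f 0 - f (0 + t * b) - f (0 + s * a)) :
    ∃ c : ℝ, ∀ t : ℝ, deriv (deriv f) t = c := by
  have hd : Differentiable ℝ f := hf.differentiable (by norm_num)
  have hd' : Differentiable ℝ (deriv f) :=
    ((contDiff_succ_iff_deriv (n := 1)).1 hf).2.2.differentiable (by norm_num)
  have h' : ∀ s t x, f (x + t + s) - f (x + s) - (f (x + t) - f x) =
      f (t + s) - f s - (f t - f 0) := by
    intro s t x
    have := h (s / a) (t / b) x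
    simp only [div_mul_cancel₀ _ ha, div_mul_cancel₀ _ hb, zero_add] at this
    rw [add_right_comm x t s, add_comm t s]
    linarith
  have key : ∀ t x, deriv f (x + t) - deriv f x = deriv f t - deriv f 0 := by
    intro t x
    have e : (fun s => f (x + t + s) - f (x + s) - (f (x + t) - f x)) =
      fun s => f (t + s) - f (0 + s) - (f t - f 0) := by
      funext s; rw [zero_add]; exact h' s t x
    have sh : ∀ u : ℝ, HasDerivAt (fun s => f (u + s)) (deriv f u) 0 := by
      intro u
      have := (hd (u + 0)).hasDerivAt.comp_const_add u 0
      simpa using this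
    have d1 := ((sh (x + t)).sub (sh x)).sub_const (f (x + t) - f x)
    have d2 := ((sh t).sub (sh 0)).sub_const (f t - f 0)
    exact d1.unique (e ▸ d2)
  refine ⟨deriv (deriv f) 0, fun x => ?_⟩
  have sh : HasDerivAt (fun s => deriv f (x + s) - deriv f x) (deriv (deriv f) x) 0 := by
    have := (hd' (x + 0)).hasDerivAt.comp_const_add x 0
    simpa using this.sub_const (deriv f x)
  have e : (fun s => deriv f (x + s) - deriv f x) = fun s => deriv f s - deriv f 0 := by
    funext s; exact key s x
  rw [e] at sh
  exact sh.unique ((hd' 0).hasDerivAt.sub_const _)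

/-- The linear algebra at the end. -/
theorem ica_linalg {n : ℕ} (A : Matrix (Fin n) (Fin n) ℝ) (hA : Aᵀ * A = 1)
    (i₀ : Fin n → Prop) (hi₀ : ∀ i j, i₀ i → i₀ j → i = j)
    (h : ∀ i, ¬ i₀ i → ∀ k l, k ≠ l → A k i * A l i = 0) :
    (∀ k : Fin n, ∃! l : Fin n, A k l ≠ 0) ∧
    (∀ l : Fin n, ∃! k : Fin n, A k l ≠ 0) := by
  have hA' : A * Aᵀ = 1 := mul_eq_one_comm.1 hA
  have row : ∀ k l, ∑ i, A k i * A l i = if k = l then 1 else 0 := by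
    intro k l
    have := congrFun (congrFun hA' k) l
    simpa [Matrix.mul_apply, Matrix.one_apply] using this
  have col : ∀ i j, ∑ k, A k i * A k j = if i = j then 1 else 0 := by
    intro k l
    have := congrFun (congrFun hA k) l
    simpa [Matrix.mul_apply, Matrix.one_apply] using this
  have hall : ∀ i k l, k ≠ l → A k i * A l i = 0 := by
    intro i k l hkl
    by_cases hi : i₀ i
    · have := row k l
      rw [if_neg hkl, Finset.sum_eq_single i] at this
      · exact this
      · intro j _ hj
        exact h j (fun hj' => hj (hi₀ j i hj' hi)) k l hkl
      · simp
    · exact h i hi k l hkl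
  constructor
  · intro k
    obtain ⟨l, hl⟩ : ∃ l, A k l ≠ 0 := by
      by_contra hcon
      push Not at hcon
      have := row k k
      simp [hcon] at this
    refine ⟨l, hl, fun l' hl' => ?_⟩
    by_contra hne
    have := col l' l
    rw [if_neg hne, Finset.sum_eq_single k] at this
    · exact (mul_ne_zero hl' hl) this
    · intro j _ hj
      have := (mul_eq_zero.1 (hall l j k hj)).resolve_right hl
      rw [this, mul_zero]
    · simp
  · intro l
    obtain ⟨k, hk⟩ : ∃ k, A k l ≠ 0 := by
      by_contra hcon
      push Not at hcon
      have := col l l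
      simp [hcon] at this
    refine ⟨k, hk, fun k' hk' => ?_⟩
    by_contra hne
    exact (mul_ne_zero hk' hk) (hall l k' k hne)

theorem ica_map_density {n : ℕ} (A : Matrix (Fin n) (Fin n) ℝ) (hA : Aᵀ * A = 1)
    (Q : (Fin n → ℝ) → ENNReal) (hQ : Continuous Q) :
    Measure.map (fun x => A.mulVec x) ((volume : Measure (Fin n → ℝ)).withDensity Q) =
      volume.withDensity (fun y => Q (Aᵀ.mulVec y)) := by
  have hdet : |A.det| = 1 := by
    have := congrArg Matrix.det hA
    rw [Matrix.det_mul, Matrix.det_transpose, Matrix.det_one] at this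
    rcases mul_self_eq_one_iff.1 this with h | h <;> simp [h]
  have hd0 : A.det ≠ 0 := by
    intro h; simp [h] at hdet
  have hm : Measurable (fun x : Fin n → ℝ => A.mulVec x) :=
    (Continuous.matrix_mulVec continuous_const continuous_id).measurable
  have hmp : MeasurePreserving (fun x : Fin n → ℝ => A.mulVec x) volume volume := by
    refine ⟨hm, ?_⟩
    have := Real.map_matrix_volume_pi_eq_smul_volume_pi hd0
    rw [abs_inv, hdet, inv_one, ENNReal.ofReal_one, one_smul] at this
    exact this
  have hc : Continuous (fun y : Fin n → ℝ => Q (Aᵀ.mulVec y)) :=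
    hQ.comp (Continuous.matrix_mulVec continuous_const continuous_id)
  ext s hs
  rw [Measure.map_apply hm hs, withDensity_apply _ (hm hs), withDensity_apply _ hs,
    ← hmp.setLIntegral_comp_preimage hs hc.measurable]
  simp [Matrix.mulVec_mulVec, hA]


/-- Identifiability of linear ICA with an orthogonal mixing matrix: if the
independent components have smooth strictly positive densities, at most one of
them has constant second log-derivative (at most one Gaussian), and an orthogonal
mixing of them again has independent coordinates (the pushforward is a product
measure), then the mixing matrix has exactly one nonzero entry in each row and
each column. -/
theorem linear_ICA_identifiability_orthogonal
    (n : ℕ) (hn : 1 ≤ n)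
    (p : Fin n → ℝ → ℝ)
    (hpos : ∀ i, ∀ t : ℝ, 0 < p i t)
    (hdens : ∀ i, ∫ t : ℝ, p i t = 1)
    (hsmooth : ∀ i, ContDiff ℝ 2 (fun t => Real.log (p i t)))
    (hgauss : ∀ i j : Fin n,
      (∃ c : ℝ, ∀ t : ℝ, deriv (deriv (fun s => Real.log (p i s))) t = c) →
      (∃ c : ℝ, ∀ t : ℝ, deriv (deriv (fun s => Real.log (p j s))) t = c) →
      i = j)
    (A : Matrix (Fin n) (Fin n) ℝ) (hA : Aᵀ * A = 1)
    (μ : Measure (Fin n → ℝ))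
    (hμ : μ = Measure.pi (fun i => volume.withDensity (fun t => ENNReal.ofReal (p i t))))
    (hprod : ∃ ν : Fin n → Measure ℝ,
      Measure.map (fun x => A.mulVec x) μ = Measure.pi ν) :
    (∀ k : Fin n, ∃! l : Fin n, A k l ≠ 0) ∧
    (∀ l : Fin n, ∃! k : Fin n, A k l ≠ 0) := by
  have hcont : ∀ i, Continuous (p i) := by
    intro i
    have : p i = fun t => Real.exp (Real.log (p i t)) := by
      funext t; rw [Real.exp_log (hpos i t)]
    rw [this]
    exact Real.continuous_exp.comp (hsmooth i).continuous
  have hint : ∀ i, Integrable (p i) := fun i => by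
    by_contra hcon
    have := hdens i
    rw [integral_undef hcon] at this
    norm_num at this
  obtain ⟨ν, hν⟩ := hprod
  have hprob : ∀ i, IsProbabilityMeasure
      ((volume : Measure ℝ).withDensity (fun t => ENNReal.ofReal (p i t))) := by
    intro i
    refine ⟨?_⟩
    rw [withDensity_apply _ MeasurableSet.univ, Measure.restrict_univ,
      ← ofReal_integral_eq_lintegral_ofReal (hint i) (ae_of_all _ fun t => (hpos i t).le),
      hdens i, ENNReal.ofReal_one]
  have hm : Measurable (fun x : Fin n → ℝ => A.mulVec x) :=
    (Continuous.matrix_mulVec continuous_const continuous_id).measurable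
  have huniv : Measure.pi ν Set.univ = 1 := by
    rw [← hν, Measure.map_apply hm MeasurableSet.univ, hμ]
    simp
  have hσ : ∀ i, SigmaFinite (ν i) := fun i =>
    ica_sigmaFinite ν (by simp [huniv]) (by simp [huniv]) i
  have hPc : Continuous (fun x : Fin n → ℝ => ∏ i, p i (x i)) :=
    continuous_finsetProd _ fun i _ => (hcont i).comp (continuous_apply i)
  have hQc : Continuous (fun x : Fin n → ℝ => ENNReal.ofReal (∏ i, p i (x i))) :=
    ENNReal.continuous_ofReal.comp hPc
  rw [hμ, ica_pi_density p hpos hint, ica_map_density A hA _ hQc] at hν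
  have hswap := ica_swap _ (hQc.comp
    (Continuous.matrix_mulVec continuous_const continuous_id :
      Continuous (fun y : Fin n → ℝ => Aᵀ.mulVec y))) (fun _ => ENNReal.ofReal_ne_top) ν hν
  set f : Fin n → ℝ → ℝ := fun i t => Real.log (p i t) with hf
  have hswap2 : ∀ (y z : Fin n → ℝ) (k : Fin n),
      ∑ i, f i ((Aᵀ.mulVec y) i) + ∑ i, f i ((Aᵀ.mulVec z) i) =
      ∑ i, f i ((Aᵀ.mulVec (Function.update y k (z k))) i) +
        ∑ i, f i ((Aᵀ.mulVec (Function.update z k (y k))) i) := by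
    intro y z k
    have h1 := hswap y z k
    have hP : ∀ x : Fin n → ℝ, 0 < ∏ i, p i (x i) := fun x => Finset.prod_pos fun i _ => hpos i _
    simp only [Function.comp] at h1
    rw [← ENNReal.ofReal_mul (hP _).le, ← ENNReal.ofReal_mul (hP _).le,
      ENNReal.ofReal_eq_ofReal_iff (mul_pos (hP _) (hP _)).le (mul_pos (hP _) (hP _)).le] at h1
    have h2 := congrArg Real.log h1
    rw [Real.log_mul (hP _).ne' (hP _).ne', Real.log_mul (hP _).ne' (hP _).ne'] at h2
    have hl : ∀ x : Fin n → ℝ, Real.log (∏ i, p i (x i)) = ∑ i, f i (x i) := fun x =>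
      Real.log_prod fun i _ => (hpos i _).ne'
    simpa only [hl] using h2
  have hfe : ∀ (k l : Fin n), k ≠ l → ∀ (x : Fin n → ℝ) (s t : ℝ),
      ∑ i, (f i (x i + s * A k i + t * A l i) + f i (x i) - f i (x i + t * A l i)
        - f i (x i + s * A k i)) = 0 := by
    intro k l hkl x s t
    set z := A.mulVec x with hz
    have hx : Aᵀ.mulVec z = x := by rw [hz, Matrix.mulVec_mulVec, hA, Matrix.one_mulVec]
    have h1 := hswap2 (z + Pi.single k s + Pi.single l t) z k
    have e1 : Function.update (z + Pi.single k s + Pi.single l t) k (z k) =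
        z + Pi.single l t := by
      funext j
      by_cases hj : j = k
      · subst hj; simp [hkl]
      · simp [hj]
    have e2 : Function.update z k ((z + Pi.single k s + Pi.single l t : Fin n → ℝ) k) =
        z + Pi.single k s := by
      funext j
      by_cases hj : j = k
      · subst hj; simp [hkl]
      · simp [hj]
    rw [e1, e2] at h1
    simp only [Matrix.mulVec_add, hx, Matrix.mulVec_single, Pi.add_apply, Pi.smul_apply,
      Matrix.col_apply, Matrix.transpose_apply, MulOpposite.smul_eq_mul_unop,
      MulOpposite.unop_op] at h1
    simp only [Finset.sum_sub_distrib, Finset.sum_add_distrib, mul_comm s, mul_comm t]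
    linarith
  refine ica_linalg A hA
    (fun i => ∃ c : ℝ, ∀ t : ℝ, deriv (deriv (fun s => Real.log (p i s))) t = c) hgauss ?_
  intro i hi k l hkl
  by_contra hne
  obtain ⟨ha, hb⟩ := mul_ne_zero_iff.1 hne
  apply hi
  refine ica_const (f i) (hsmooth i) (A k i) (A l i) ha hb ?_
  intro s t x
  have h1 := hfe k l hkl (Function.update 0 i x) s t
  have h2 := hfe k l hkl 0 s t
  rw [← Finset.add_sum_erase _ _ (Finset.mem_univ i)] at h1 h2
  have h3 : ∀ j ∈ Finset.univ.erase i, Function.update (0 : Fin n → ℝ) i x j = 0 := by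
    intro j hj
    simp [Finset.ne_of_mem_erase hj]
  rw [Finset.sum_congr rfl (g := fun j => f j ((0 : Fin n → ℝ) j + s * A k j + t * A l j)
    + f j ((0 : Fin n → ℝ) j) - f j ((0 : Fin n → ℝ) j + t * A l j)
        - f j ((0 : Fin n → ℝ) j + s * A k j))
    (fun j hj => by rw [h3 j hj]; rfl)] at h1
  have h4 := h1.trans h2.symm
  have h5 := add_right_cancel h4
  simpa using h5
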